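/- arXiv:1901.10678 — 4 statements merged into one kernel-verified Lean document; each statement's English description precedes it below -/
import Mathlib

section
/- The direct backstepping kernel q is a real-analytic function on ℝ² and solves the Goursat problem: q_xx(x,y) − q_yy(x,y) = −(λ/D) q(x,y) for all (x,y) ∈ ℝ², q(0,y) = 0 for all y ∈ ℝ, and q(x,x) = −(λ/(2D)) x for all x ∈ ℝ (so that (d/dx) q(x,x) = −λ/(2D)). -/
/-- `Φ_j(x,y) = 2^{-j} ∑_{m=0}^∞ ((λ/(4D))(y² − x²))^m / (m! (m+j)!)`,
which equals `I_j(z)/z^j` with `z = √((λ/D)(y² − x²))`. -/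
noncomputable def Phi (D lam : ℝ) (j : ℕ) (x y : ℝ) : ℝ :=
  (1 / 2 ^ j) *
    ∑' m : ℕ, (lam / (4 * D) * (y ^ 2 - x ^ 2)) ^ m / (m.factorial * (m + j).factorial : ℝ)

/-- The direct backstepping kernel `q(x,y) = −(λ/D) x Φ₁(x,y)`. -/
noncomputable def qker (D lam : ℝ) (x y : ℝ) : ℝ :=
  -(lam / D) * x * Phi D lam 1 x y

noncomputable def FF (j : ℕ) (s : ℝ) : ℝ := ∑' m : ℕ, s ^ m / (m.factorial * (m + j).factorial : ℝ)

lemma FF_summable (j : ℕ) (s : ℝ) :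
    Summable (fun m : ℕ => s ^ m / (m.factorial * (m + j).factorial : ℝ)) := by
  refine Summable.of_norm_bounded (g := fun m : ℕ => |s| ^ m / m.factorial)
    (Real.summable_pow_div_factorial |s|) fun m => ?_
  have h1 : (1:ℝ) ≤ (m + j).factorial := by exact_mod_cast Nat.one_le_iff_ne_zero.mpr (Nat.factorial_ne_zero _)
  have h2 : (0:ℝ) < m.factorial := by positivity
  rw [Real.norm_eq_abs, abs_div, abs_pow, abs_of_pos (by positivity : (0:ℝ) < m.factorial * (m + j).factorial)]
  gcongr
  nlinarith

lemma FF_term (j m : ℕ) (s : ℝ) :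
    ((m + 1 : ℕ) : ℝ) * s ^ m / ((m + 1).factorial * (m + 1 + j).factorial : ℝ)
      = s ^ m / (m.factorial * (m + (j + 1)).factorial : ℝ) := by
  rw [Nat.factorial_succ, show m + 1 + j = m + (j + 1) by ring]
  push_cast
  have h2 : (m.factorial : ℝ) ≠ 0 := by positivity
  have h3 : ((m + (j + 1)).factorial : ℝ) ≠ 0 := by positivity
  field_simp

lemma FF_hasDerivAt (j : ℕ) (s : ℝ) : HasDerivAt (FF j) (FF (j + 1) s) s := by
  have hu : Summable (fun m : ℕ => (m : ℝ) * (|s| + 1) ^ (m - 1) / (m.factorial * (m + j).factorial : ℝ)) := by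
    rw [← summable_nat_add_iff 1]
    refine (FF_summable (j + 1) (|s| + 1)).congr fun m => ?_
    exact (FF_term j m _).symm
  have h := hasDerivAt_tsum_of_isPreconnected (𝕜 := ℝ)
    (g := fun (m : ℕ) (t : ℝ) => t ^ m / (m.factorial * (m + j).factorial : ℝ))
    (g' := fun (m : ℕ) (t : ℝ) => (m : ℝ) * t ^ (m - 1) / (m.factorial * (m + j).factorial : ℝ))
    (t := Metric.ball (0:ℝ) (|s| + 1)) (y₀ := s) (y := s) hu Metric.isOpen_ball
    (convex_ball _ _).isPreconnected
    (fun m t _ => (hasDerivAt_pow m t).div_const _)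
    (fun m t ht => by
      rw [mem_ball_zero_iff] at ht
      rw [norm_div, norm_mul, norm_pow, Real.norm_of_nonneg (by positivity : (0:ℝ) ≤ m.factorial * (m + j).factorial),
        Real.norm_of_nonneg (by positivity : (0:ℝ) ≤ m)]
      gcongr)
    (by simp) (FF_summable j s) (by simp)
  refine h.congr_deriv ?_
  have hs : Summable (fun m : ℕ => (m : ℝ) * s ^ (m - 1) / (m.factorial * (m + j).factorial : ℝ)) := by
    rw [← summable_nat_add_iff 1]
    exact (FF_summable (j + 1) s).congr fun m => (FF_term j m _).symm
  rw [hs.tsum_eq_zero_add]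
  simp only [Nat.cast_zero, zero_mul, zero_div, zero_add]
  exact tsum_congr fun m => FF_term j m s

lemma FF_rec (j : ℕ) (s : ℝ) : s * FF (j + 2) s + (j + 1) * FF (j + 1) s = FF j s := by
  unfold FF
  rw [(FF_summable (j + 1) s).tsum_eq_zero_add, (FF_summable j s).tsum_eq_zero_add, mul_add,
    ← tsum_mul_left, ← tsum_mul_left, add_left_comm,
    ← ((FF_summable (j + 2) s).mul_left s).tsum_add
      (((summable_nat_add_iff 1).mpr (FF_summable (j + 1) s)).mul_left ((j : ℝ) + 1))]
  congr 1
  · simp only [pow_zero, zero_add, Nat.factorial_zero, Nat.cast_one, one_mul, Nat.factorial_succ]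
    push_cast
    have h3 : (j.factorial : ℝ) ≠ 0 := by positivity
    field_simp
  · refine tsum_congr fun m => ?_
    rw [show m + (j + 2) = m + j + 1 + 1 by ring, show m + 1 + (j + 1) = m + j + 1 + 1 by ring,
      show m + 1 + j = m + j + 1 by ring, Nat.factorial_succ (m + j + 1), Nat.factorial_succ m]
    push_cast
    have h2 : (m.factorial : ℝ) ≠ 0 := by positivity
    have h3 : ((m + j + 1).factorial : ℝ) ≠ 0 := by positivity
    have h4 : (m : ℝ) + j + 1 + 1 ≠ 0 := by positivity
    field_simp
    ring

lemma FF_analytic (j : ℕ) (s : ℝ) : AnalyticAt ℝ (FF j) s := by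
  set c : ℕ → ℝ := fun m => 1 / (m.factorial * (m + j).factorial : ℝ) with hc
  have hF : FF j = (FormalMultilinearSeries.ofScalars ℝ c).sum := by
    change FF j = FormalMultilinearSeries.ofScalarsSum c
    funext t
    rw [FormalMultilinearSeries.ofScalars_sum_eq]
    refine tsum_congr fun m => ?_
    simp only [hc, smul_eq_mul]
    ring
  have hr : (FormalMultilinearSeries.ofScalars ℝ c).radius = ⊤ := by
    refine FormalMultilinearSeries.radius_eq_top_of_summable_norm _ fun r => ?_
    refine (FF_summable j r).congr fun m => ?_
    rw [FormalMultilinearSeries.ofScalars_norm, Real.norm_of_nonneg (by positivity)]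
    simp only [hc]
    ring
  have h := (FormalMultilinearSeries.ofScalars ℝ c).hasFPowerSeriesOnBall (by simp [hr])
  rw [hF]
  exact h.analyticAt_of_mem (by simp [hr])

/-- The direct backstepping kernel `q` is real-analytic on `ℝ²` and solves the
Goursat problem `q_xx − q_yy = −(λ/D) q`, `q(0,y) = 0`, `q(x,x) = −(λ/(2D)) x`. -/
theorem direct_kernel_goursat (D lam : ℝ) (hD : 0 < D) (hlam : 0 < lam) :
    (∀ p : ℝ × ℝ, AnalyticAt ℝ (fun p : ℝ × ℝ => qker D lam p.1 p.2) p) ∧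
    (∀ x y : ℝ,
      iteratedDeriv 2 (fun x' => qker D lam x' y) x
        - iteratedDeriv 2 (fun y' => qker D lam x y') y = -(lam / D) * qker D lam x y) ∧
    (∀ y : ℝ, qker D lam 0 y = 0) ∧
    (∀ x : ℝ, qker D lam x x = -(lam / (2 * D)) * x) := by
  have hq : ∀ x y, qker D lam x y = -(lam / D) / 2 * (x * FF 1 (lam / (4 * D) * (y ^ 2 - x ^ 2))) := by
    intro x y
    simp only [qker, Phi, FF]
    ring
  refine ⟨fun p => ?_, fun x y => ?_, fun y => ?_, fun x => ?_⟩
  · simp only [hq]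
    refine analyticAt_const.mul (analyticAt_fst.mul ?_)
    exact (FF_analytic 1 _).comp_of_eq (f := fun p : ℝ × ℝ => lam / (4 * D) * (p.2 ^ 2 - p.1 ^ 2))
      (analyticAt_const.mul ((analyticAt_snd.pow 2).sub (analyticAt_fst.pow 2))) rfl
  · simp only [hq, iteratedDeriv_succ, iteratedDeriv_zero]
    set c := lam / (4 * D) with hc
    have hlc : lam / D = 4 * c := by rw [hc]; field_simp
    rw [hlc]
    have dx : ∀ j y x, HasDerivAt (fun x : ℝ => FF j (c * (y ^ 2 - x ^ 2)))
        (FF (j + 1) (c * (y ^ 2 - x ^ 2)) * (-2 * c * x)) x := by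
      intro j y x
      have h1 : HasDerivAt (fun x : ℝ => c * (y ^ 2 - x ^ 2)) (-2 * c * x) x := by
        refine (((hasDerivAt_pow 2 x).const_sub (y ^ 2)).const_mul c).congr_deriv ?_
        norm_num; ring
      exact (FF_hasDerivAt j (c * (y ^ 2 - x ^ 2))).comp x h1
    have dy : ∀ j x y, HasDerivAt (fun y : ℝ => FF j (c * (y ^ 2 - x ^ 2)))
        (FF (j + 1) (c * (y ^ 2 - x ^ 2)) * (2 * c * y)) y := by
      intro j x y
      have h1 : HasDerivAt (fun y : ℝ => c * (y ^ 2 - x ^ 2)) (2 * c * y) y := by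
        refine (((hasDerivAt_pow 2 y).sub_const (x ^ 2)).const_mul c).congr_deriv ?_
        norm_num; ring
      exact (FF_hasDerivAt j (c * (y ^ 2 - x ^ 2))).comp y h1
    have e1 := funext fun x => (((hasDerivAt_id' x).mul (dx 1 y x)).const_mul (-(4 * c) / 2)).deriv
    have e2 := funext fun y => (((dy 1 x y).const_mul x).const_mul (-(4 * c) / 2)).deriv
    have f1 := (((((hasDerivAt_const x (1:ℝ)).mul (dx 1 y x)).add
      ((hasDerivAt_id' x).mul ((dx 2 y x).mul ((hasDerivAt_id' x).const_mul (-2 * c)))))).const_mul (-(4 * c) / 2)).deriv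
    have f2 := ((((dy 2 x y).mul ((hasDerivAt_id' y).const_mul (2 * c))).const_mul x).const_mul (-(4 * c) / 2)).deriv
    have e1' : deriv (deriv fun x' => -(4 * c) / 2 * (x' * FF 1 (c * (y ^ 2 - x' ^ 2)))) x = _ :=
      (congrArg (fun g => deriv g x) e1).trans f1
    have e2' : deriv (deriv fun y' => -(4 * c) / 2 * (x * FF 1 (c * (y' ^ 2 - x ^ 2)))) y = _ :=
      (congrArg (fun g => deriv g y) e2).trans f2
    rw [e1', e2', ← FF_rec 1 (c * (y ^ 2 - x ^ 2))]
    norm_num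
    ring
  · simp [hq]
  · rw [hq]
    have : FF 1 0 = 1 := by
      unfold FF
      rw [tsum_eq_single 0 (fun m hm => by simp [hm])]
      simp
    simp only [sub_self, mul_zero, this]
    field_simp
end

section
/- The direct and inverse backstepping kernels satisfy the reciprocity identity: for all real numbers x ≤ s, q(x,s) + r(x,s) = ∫_x^s q(x,y) r(y,s) dy. -/
/-- `Ψ_j(x,y) = 2^{-j} ∑_{m=0}^∞ (−(λ/(4D))(y² − x²))^m / (m! (m+j)!)`. -/
noncomputable def Psi (D lam : ℝ) (j : ℕ) (x y : ℝ) : ℝ :=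
  (1 / 2 ^ j) *
    ∑' m : ℕ, (-(lam / (4 * D)) * (y ^ 2 - x ^ 2)) ^ m / (m.factorial * (m + j).factorial : ℝ)

/-- The inverse backstepping kernel `r(x,y) = (λ/D) x Ψ₁(x,y)`. -/
noncomputable def rker (D lam : ℝ) (x y : ℝ) : ℝ :=
  lam / D * x * Psi D lam 1 x y

open scoped Nat in
lemma kr_deriv (c : ℕ → ℝ) (hc : ∀ m, |c m| ≤ 1 / (m ! : ℝ)) (u : ℝ) :
    HasDerivAt (fun u => ∑' m, c m * u ^ m) (∑' m : ℕ, ((m : ℝ) + 1) * c (m + 1) * u ^ m) u := by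
  set R : ℝ := |u| + 1 with hR
  have hR0 : 0 < R := by positivity
  have hsum0 : Summable fun m : ℕ => R ^ m / (m ! : ℝ) := Real.summable_pow_div_factorial R
  have key : HasDerivAt (fun z => ∑' m, c m * z ^ m)
      (∑' m : ℕ, c m * ((m : ℝ) * u ^ (m - 1))) u := by
    refine hasDerivAt_tsum_of_isPreconnected (t := Metric.ball 0 R) (y₀ := u)
      (u := fun m : ℕ => 1 / (m ! : ℝ) * ((m : ℝ) * R ^ (m - 1)))
      (g := fun m z => c m * z ^ m) (g' := fun m z => c m * ((m : ℝ) * z ^ (m - 1)))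
      ?_ Metric.isOpen_ball (convex_ball 0 R).isPreconnected ?_ ?_ ?_ ?_ ?_
    · rw [← summable_nat_add_iff 1]
      refine hsum0.congr fun m => ?_
      rw [Nat.factorial_succ]
      push_cast
      have : (m ! : ℝ) ≠ 0 := by positivity
      try simp only [Nat.add_sub_cancel]
      field_simp
    · intro m z _
      exact (hasDerivAt_pow m z).const_mul (c m)
    · intro m z hz
      have hz' : |z| ≤ R := by
        have := mem_ball_zero_iff.1 hz
        rw [Real.norm_eq_abs] at this
        exact this.le
      rw [Real.norm_eq_abs, abs_mul, abs_mul, abs_pow, Nat.abs_cast]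
      gcongr
      exact hc m
    · simp [hR]
    · refine Summable.of_norm_bounded hsum0 fun m => ?_
      rw [Real.norm_eq_abs, abs_mul, abs_pow, div_eq_mul_one_div, mul_comm]
      have : |u| ≤ R := by simp [hR]
      gcongr
      exact hc m
    · simp [hR]
  convert key using 1
  symm
  have hs : Summable fun m : ℕ => c m * ((m : ℝ) * u ^ (m - 1)) := by
    rw [← summable_nat_add_iff 1]
    refine Summable.of_norm_bounded (Real.summable_pow_div_factorial |u|) fun m => ?_
    have h := hc (m + 1)
    rw [Real.norm_eq_abs, abs_mul, abs_mul, abs_pow, Nat.abs_cast]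
    calc _ ≤ 1 / ((m + 1)! : ℝ) * (((m + 1 : ℕ) : ℝ) * |u| ^ (m + 1 - 1)) := by gcongr
      _ = _ := by
        rw [Nat.factorial_succ]
        push_cast
        have : (m ! : ℝ) ≠ 0 := by positivity
        try simp only [Nat.add_sub_cancel]
        field_simp
  rw [hs.tsum_eq_zero_add]
  simp only [Nat.cast_zero, zero_mul, mul_zero, zero_add, Nat.add_sub_cancel, Nat.cast_add,
    Nat.cast_one]
  exact tsum_congr fun m => by ring

open scoped Nat in
noncomputable def krF (u : ℝ) : ℝ := ∑' m : ℕ, u ^ m / (m ! * (m + 1)! : ℝ)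

open scoped Nat in
noncomputable def krf (u : ℝ) : ℝ := ∑' m : ℕ, 1 / (m ! * m ! : ℝ) * u ^ m

open scoped Nat in
lemma kr_one_le (m : ℕ) : (1 : ℝ) ≤ m ! := by exact_mod_cast Nat.factorial_pos m

open scoped Nat in
lemma krf_deriv (u : ℝ) : HasDerivAt krf (krF u) u := by
  have h := kr_deriv (fun m => 1 / (m ! * m ! : ℝ)) (fun m => by
    rw [abs_of_nonneg (by positivity)]
    have := kr_one_le m
    apply one_div_le_one_div_of_le (by positivity)
    nlinarith) u
  refine HasDerivAt.congr_deriv (f := krf) h ?_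
  unfold krF
  refine tsum_congr fun m => ?_
  rw [Nat.factorial_succ]
  push_cast
  have : (m ! : ℝ) ≠ 0 := by positivity
  field_simp

open scoped Nat in
lemma krF_diff (u : ℝ) : DifferentiableAt ℝ krF u := by
  have h := kr_deriv (fun m => 1 / (m ! * (m + 1)! : ℝ)) (fun m => by
    rw [abs_of_nonneg (by positivity)]
    have := kr_one_le m
    have := kr_one_le (m + 1)
    apply one_div_le_one_div_of_le (by positivity)
    nlinarith) u
  have e : krF = fun u => ∑' m : ℕ, 1 / (m ! * (m + 1)! : ℝ) * u ^ m := by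
    funext z
    exact tsum_congr fun m => by ring
  rw [e]
  exact h.differentiableAt

open scoped Nat in
lemma kruF_deriv (u : ℝ) : HasDerivAt (fun u => u * krF u) (krf u) u := by
  have hc : ∀ m : ℕ, |(m : ℝ) / (m ! * m ! : ℝ)| ≤ 1 / (m ! : ℝ) := fun m => by
    rw [abs_of_nonneg (by positivity), div_le_div_iff₀ (by positivity) (by positivity)]
    have h : (m : ℝ) ≤ m ! := by exact_mod_cast Nat.self_le_factorial m
    have := kr_one_le m
    nlinarith
  have h := kr_deriv (fun m => (m : ℝ) / (m ! * m ! : ℝ)) hc u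
  convert h using 1
  · funext z
    have hs : Summable fun m : ℕ => (m : ℝ) / (m ! * m ! : ℝ) * z ^ m := by
      refine Summable.of_norm_bounded (Real.summable_pow_div_factorial |z|) fun m => ?_
      rw [Real.norm_eq_abs, abs_mul, abs_pow, div_eq_mul_one_div (|z| ^ m), mul_comm]
      gcongr
      exact hc m
    rw [hs.tsum_eq_zero_add]
    simp only [Nat.cast_zero, zero_mul, zero_div, zero_add, krF, ← tsum_mul_left]
    refine tsum_congr fun m => ?_
    rw [Nat.factorial_succ]
    push_cast
    have : (m ! : ℝ) ≠ 0 := by positivity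
    field_simp
    ring
  · refine tsum_congr fun m => ?_
    rw [Nat.factorial_succ]
    push_cast
    have : (m ! : ℝ) ≠ 0 := by positivity
    field_simp

lemma krF_cont : Continuous krF :=
  continuous_iff_continuousAt.2 fun u => (krF_diff u).continuousAt

lemma krf_zero : krf 0 = 1 := by
  unfold krf
  rw [tsum_eq_single 0]
  · simp
  · intro m hm
    simp [hm]

lemma kr_conv (T : ℝ) : ∫ u in (0 : ℝ)..T, krF u * krF (u - T) = krF T - krF (-T) := by
  rcases eq_or_ne T 0 with rfl | hT
  · simp
  have hd : ∀ u : ℝ, HasDerivAt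
      (fun u => (u * krF u) * krf (u - T) - ((u - T) * krF (u - T)) * krf u)
      (T * (krF u * krF (u - T))) u := by
    intro u
    have h1 := (krf_deriv (u - T)).comp_sub_const u T
    have h2 := (kruF_deriv (u - T)).comp_sub_const u T
    refine (((kruF_deriv u).mul h1).sub (h2.mul (krf_deriv u))).congr_deriv ?_
    ring
  have hc : Continuous fun u => krF u * krF (u - T) :=
    krF_cont.mul (krF_cont.comp (continuous_id.sub continuous_const))
  have h := intervalIntegral.integral_eq_sub_of_hasDerivAt (a := 0) (b := T)
    (fun u _ => hd u) ((continuous_const.mul hc).intervalIntegrable _ _)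
  rw [intervalIntegral.integral_const_mul] at h
  apply mul_left_cancel₀ hT
  rw [h]
  simp [krf_zero]
  ring

/-- Reciprocity identity between the direct and inverse backstepping kernels:
`q(x,s) + r(x,s) = ∫_x^s q(x,y) r(y,s) dy` for all `x ≤ s`. -/
theorem kernel_reciprocity (D lam : ℝ) (hD : 0 < D) (hlam : 0 < lam) :
    ∀ x s : ℝ, x ≤ s →
      qker D lam x s + rker D lam x s = ∫ y in x..s, qker D lam x y * rker D lam y s := by
  intro x s _
  set a : ℝ := lam / (4 * D) with ha
  have hq : ∀ x y, qker D lam x y = -(2 * a * x * krF (a * (y ^ 2 - x ^ 2))) := by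
    intro x y
    simp only [qker, Phi, krF, ← ha]
    have : lam / D = 4 * a := by rw [ha]; field_simp
    rw [this]
    ring
  have hr : ∀ x y, rker D lam x y = 2 * a * x * krF (-a * (y ^ 2 - x ^ 2)) := by
    intro x y
    simp only [rker, Psi, krF, ← ha]
    have : lam / D = 4 * a := by rw [ha]; field_simp
    rw [this]
    ring
  set T : ℝ := a * (s ^ 2 - x ^ 2) with hT
  have hsub := intervalIntegral.integral_comp_mul_deriv (a := x) (b := s)
    (f := fun y => a * (y ^ 2 - x ^ 2)) (f' := fun y => a * (2 * y))
    (g := fun u => krF u * krF (u - T))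
    (fun y _ => by
      simpa using (((hasDerivAt_pow 2 y).sub_const (x ^ 2)).const_mul a))
    (by fun_prop)
    (krF_cont.mul (krF_cont.comp (continuous_id.sub continuous_const)))
  have h0 : a * (x ^ 2 - x ^ 2) = 0 := by ring
  simp only [h0, ← hT] at hsub
  rw [kr_conv] at hsub
  have : ∀ y, qker D lam x y * rker D lam y s = (-(2 * a * x)) *
      (((fun u => krF u * krF (u - T)) ∘ fun y => a * (y ^ 2 - x ^ 2)) y * (a * (2 * y))) := by
    intro y
    have e : a * (y ^ 2 - x ^ 2) - T = -a * (s ^ 2 - y ^ 2) := by rw [hT]; ring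
    simp only [hq, hr, Function.comp, e]
    ring
  simp only [this]
  rw [intervalIntegral.integral_const_mul, hsub, hq, hr, ← hT, neg_mul, ← hT]
  ring
end

section
/- The backstepping transformation and its inverse transformation are mutually inverse: for every H > 0, every h ∈ ℝ, and every continuous function T̃ : [0,H] → ℝ, if w : [0,H] → ℝ is defined by w(x) := T̃(x) − ∫_x^H r(x,y) T̃(y) dy − φ(x,H) h, then T̃(x) = w(x) − ∫_x^H q(x,y) w(y) dy − ψ(x,H) h for all x ∈ [0,H]. -/
/-- `ψ(x,H) = (D/β) q(x,H)`. -/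
noncomputable def psiK (D lam beta : ℝ) (x H : ℝ) : ℝ :=
  D / beta * qker D lam x H

/-- `φ(x,H) = (D/β) r(x,H)`. -/
noncomputable def phiK (D lam beta : ℝ) (x H : ℝ) : ℝ :=
  D / beta * rker D lam x H

theorem bs_hasDeriv (a : ℕ → ℝ) (ha : ∀ m, |a m| ≤ 1 / (m.factorial : ℝ)) (s : ℝ) :
    HasDerivAt (fun t => ∑' m, a m * t ^ m) (∑' m : ℕ, ((m:ℝ)+1) * a (m+1) * s ^ m) s := by
  set R := |s| + 1 with hR
  have hR0 : 0 ≤ R := by positivity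
  have hs : s ∈ Metric.ball (0:ℝ) R := by simp [hR]
  have hu : Summable (fun m : ℕ => (m:ℝ) * R ^ (m-1) / m.factorial) := by
    rw [← summable_nat_add_iff 1]
    refine (Real.summable_pow_div_factorial R).congr fun m => ?_
    rw [Nat.factorial_succ]; push_cast
    have : ((m:ℝ)+1) ≠ 0 := by positivity
    field_simp
  have hb : ∀ (n : ℕ) (y : ℝ), y ∈ Metric.ball (0:ℝ) R →
      ‖a n * ((n:ℝ) * y ^ (n-1))‖ ≤ (n:ℝ) * R ^ (n-1) / n.factorial := by
    intro n y hy
    have hy' : |y| ≤ R := by simpa using (Metric.mem_ball.1 hy).le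
    rw [Real.norm_eq_abs, abs_mul, abs_mul, abs_pow, Nat.abs_cast]
    calc |a n| * ((n:ℝ) * |y| ^ (n-1)) ≤ 1 / (n.factorial : ℝ) * ((n:ℝ) * R ^ (n-1)) := by
          gcongr
          exact ha n
      _ = _ := by ring
  have key := hasDerivAt_tsum_of_isPreconnected (g := fun n t => a n * t ^ n) 
    (g' := fun n t => a n * ((n:ℝ) * t ^ (n-1))) (t := Metric.ball (0:ℝ) R) (y₀ := 0) hu Metric.isOpen_ball
    (convex_ball _ _).isPreconnected (fun n y _ => (hasDerivAt_pow n y).const_mul _) hb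
    (by simp [hR]; positivity) (summable_of_ne_finset_zero (s := {0}) (by
      intro b hb; simp at hb; simp [hb])) hs
  refine key.congr_deriv ?_
  have hS : Summable (fun n : ℕ => a n * ((n:ℝ) * s ^ (n-1))) :=
    Summable.of_norm_bounded hu (fun n => hb n s hs)
  rw [hS.tsum_eq_zero_add]
  simp only [Nat.cast_zero, zero_mul, mul_zero, zero_add, Nat.add_sub_cancel]
  congr 1; ext m; push_cast; ring

noncomputable def bsF (s : ℝ) : ℝ := ∑' m : ℕ, s ^ m / (m.factorial * (m + 1).factorial : ℝ)
noncomputable def bsG (s : ℝ) : ℝ := ∑' m : ℕ, (1 / (m.factorial * m.factorial : ℝ)) * s ^ m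

theorem bsG_deriv (s : ℝ) : HasDerivAt bsG (bsF s) s := by
  have := bs_hasDeriv (fun m => 1 / (m.factorial * m.factorial : ℝ)) (by
    intro m
    have h1 : (1:ℝ) ≤ m.factorial := by exact_mod_cast Nat.one_le_iff_ne_zero.2 m.factorial_ne_zero
    rw [abs_of_nonneg (by positivity)]
    apply one_div_le_one_div_of_le (by positivity); nlinarith) s
  refine HasDerivAt.congr_deriv (f := bsG) this ?_
  unfold bsF
  congr 1; ext m
  rw [Nat.factorial_succ]; push_cast
  have : ((m:ℝ)+1) ≠ 0 := by positivity
  field_simp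

theorem bsF_cont : Continuous bsF := by
  have h : ∀ s, HasDerivAt bsF (∑' m : ℕ, ((m:ℝ)+1) * (1 / ((m+1).factorial * (m+1+1).factorial : ℝ)) * s ^ m) s := by
    intro s
    have := bs_hasDeriv (fun m => 1 / (m.factorial * (m+1).factorial : ℝ)) (by
      intro m
      have h1 : (1:ℝ) ≤ (m+1).factorial := by exact_mod_cast Nat.one_le_iff_ne_zero.2 (m+1).factorial_ne_zero
      have h2 : (0:ℝ) < m.factorial := by positivity
      rw [abs_of_nonneg (by positivity)]
      apply one_div_le_one_div_of_le (by positivity); nlinarith) s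
    convert this using 1
    ext t; unfold bsF; congr 1; ext m; ring
  exact continuous_iff_continuousAt.2 fun s => (h s).continuousAt

theorem bsU_deriv (s : ℝ) : HasDerivAt (fun s => s * bsF s) (bsG s) s := by
  have := bs_hasDeriv (fun m => (m:ℝ) / (m.factorial * m.factorial : ℝ)) (by
    intro m
    have h1 : (m:ℝ) ≤ m.factorial := by exact_mod_cast Nat.self_le_factorial m
    rw [abs_of_nonneg (by positivity), div_le_div_iff₀ (by positivity) (by positivity)]
    have : (0:ℝ) < m.factorial := by positivity
    nlinarith) s
  convert this using 1
  · ext t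
    rw [Summable.tsum_eq_zero_add]
    · simp only [bsF, ← tsum_mul_left]
      simp
      congr 1; ext m
      rw [Nat.factorial_succ]; push_cast
      have : ((m:ℝ)+1) ≠ 0 := by positivity
      field_simp
      ring
    · refine Summable.of_norm_bounded (Real.summable_pow_div_factorial |t|) fun m => ?_
      have h1 : (m:ℝ) ≤ m.factorial := by exact_mod_cast Nat.self_le_factorial m
      have : (0:ℝ) < m.factorial := by positivity
      rw [Real.norm_eq_abs, abs_mul, abs_pow, abs_of_nonneg (by positivity), div_mul_eq_mul_div, div_le_div_iff₀ (by positivity) (by positivity)]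
      have : 0 ≤ |t|^m * m.factorial := by positivity
      nlinarith
  · unfold bsG
    congr 1; ext m
    rw [Nat.factorial_succ]; push_cast
    have : ((m:ℝ)+1) ≠ 0 := by positivity
    field_simp

theorem bsG_zero : bsG 0 = 1 := by
  unfold bsG
  rw [tsum_eq_single 0 (by intro b hb; simp [hb])]; simp

theorem bs_kernel (c x z : ℝ) (hc : 0 < c) (hx : 0 ≤ x) (hxz : x ≤ z) :
    ∫ y in x..z, (-2 * c * x * bsF (c * (y^2-x^2))) * (2 * c * y * bsF (-c * (z^2-y^2)))
      = 2 * c * x * bsF (-c * (z^2-x^2)) + (-2 * c * x * bsF (c * (z^2-x^2))) := by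
  rcases hxz.eq_or_lt with rfl | hlt
  · simp
  have ha : 0 < c * (z^2-x^2) := by
    apply mul_pos hc; nlinarith
  set a := c * (z^2-x^2) with ha'
  have hF := bsF_cont
  have key : ∀ y ∈ Set.uIcc x z, HasDerivAt (fun y => 2 * c * x / a * 
      (bsG (c * (y^2-x^2)) * ((-c * (z^2-y^2)) * bsF (-c * (z^2-y^2))) -
       (c * (y^2-x^2)) * bsF (c * (y^2-x^2)) * bsG (-c * (z^2-y^2))))
      ((-2 * c * x * bsF (c * (y^2-x^2))) * (2 * c * y * bsF (-c * (z^2-y^2)))) y := by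
    intro y _
    have e1 : HasDerivAt (fun y : ℝ => c * (y^2-x^2)) (2*c*y) y := by
      refine (((hasDerivAt_pow 2 y).sub_const (x^2)).const_mul c).congr_deriv ?_; push_cast; ring
    have e2 : HasDerivAt (fun y : ℝ => -c * (z^2-y^2)) (2*c*y) y := by
      refine (((hasDerivAt_pow 2 y).const_sub (z^2)).const_mul (-c)).congr_deriv ?_; push_cast; ring
    have g1 := (bsG_deriv _).comp y e1
    have g2 := (bsG_deriv _).comp y e2
    have u1 := (bsU_deriv _).comp y e1
    have u2 := (bsU_deriv _).comp y e2
    have := ((g1.mul u2).sub (u1.mul g2)).const_mul (2 * c * x / a)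
    refine this.congr_deriv ?_
    simp only [Function.comp_def]
    have : a ≠ 0 := ha.ne'
    field_simp
    rw [ha']; ring
  rw [intervalIntegral.integral_eq_sub_of_hasDerivAt key]
  · have e : -c * (z^2-x^2) = -a := by rw [ha']; ring
    have : a ≠ 0 := ha.ne'
    simp only [sub_self, mul_zero, zero_mul, bsG_zero, e, ← ha']
    field_simp
    ring
  · apply Continuous.intervalIntegrable
    fun_prop

open MeasureTheory in
theorem bs_swap (f : ℝ → ℝ → ℝ) (hf : Continuous (Function.uncurry f)) (x H : ℝ) (hx : x ≤ H) :
    ∫ y in x..H, ∫ z in y..H, f y z = ∫ z in x..H, ∫ y in x..z, f y z := by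
  have hS : MeasurableSet {p : ℝ × ℝ | p.1 < p.2} := measurableSet_lt measurable_fst measurable_snd
  have hi : Integrable (Function.uncurry fun y z => if y < z then f y z else 0)
      ((volume.restrict (Set.Ioc x H)).prod (volume.restrict (Set.Ioc x H))) := by
    have : (Function.uncurry fun y z => if y < z then f y z else 0) =
        Set.indicator {p : ℝ × ℝ | p.1 < p.2} (Function.uncurry f) := by
      ext ⟨y, z⟩; simp [Set.indicator]
    rw [this]
    apply Integrable.indicator _ hS
    rw [Measure.prod_restrict]
    exact (hf.continuousOn.integrableOn_compact (isCompact_Icc.prod isCompact_Icc)).mono_set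
      (Set.prod_mono Set.Ioc_subset_Icc_self Set.Ioc_subset_Icc_self)
  have := integral_integral_swap hi
  rw [intervalIntegral.integral_of_le hx, intervalIntegral.integral_of_le hx]
  convert this using 1
  · apply setIntegral_congr_fun measurableSet_Ioc
    intro y hy
    simp only
    rw [intervalIntegral.integral_of_le hy.2]
    have : (fun z => if y < z then f y z else 0) = Set.indicator (Set.Ioi y) (f y) := by
      ext z; simp [Set.indicator]
    rw [this, setIntegral_indicator measurableSet_Ioi]
    congr 2
    ext z; simp only [Set.mem_Ioc, Set.mem_inter_iff, Set.mem_Ioi]; constructor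
    · rintro ⟨h1, h2⟩; exact ⟨⟨hy.1.trans h1, h2⟩, h1⟩
    · rintro ⟨h1, h2⟩; exact ⟨h2, h1.2⟩
  · apply setIntegral_congr_fun measurableSet_Ioc
    intro z hz
    simp only
    rw [intervalIntegral.integral_of_le hz.1.le, integral_Ioc_eq_integral_Ioo]
    have : (fun y => if y < z then f y z else 0) = Set.indicator (Set.Iio z) (fun y => f y z) := by
      ext y; simp [Set.indicator]
    rw [this, setIntegral_indicator measurableSet_Iio]
    congr 2
    ext y; simp only [Set.mem_Ioc, Set.mem_Ioo, Set.mem_inter_iff, Set.mem_Iio]; constructor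
    · rintro ⟨h1, h2⟩; exact ⟨⟨h1, h2.le.trans hz.2⟩, h2⟩
    · rintro ⟨h1, h2⟩; exact ⟨h1.1, h2⟩

theorem bs_q (D lam x y : ℝ) (hD : 0 < D) :
    qker D lam x y = -2 * (lam / (4 * D)) * x * bsF (lam / (4 * D) * (y^2-x^2)) := by
  unfold qker Phi bsF
  field_simp
  ring

theorem bs_r (D lam x y : ℝ) (hD : 0 < D) :
    rker D lam x y = 2 * (lam / (4 * D)) * x * bsF (-(lam / (4 * D)) * (y^2-x^2)) := by
  unfold rker Psi bsF
  field_simp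
  ring


/-- The backstepping transformation and its inverse are mutually inverse: if
`w(x) = T̃(x) − ∫_x^H r(x,y) T̃(y) dy − φ(x,H) h`, then
`T̃(x) = w(x) − ∫_x^H q(x,y) w(y) dy − ψ(x,H) h` on `[0,H]`. -/
theorem backstepping_transformations_inverse
    (D lam beta : ℝ) (hD : 0 < D) (hlam : 0 < lam) (hbeta : 0 < beta)
    (H : ℝ) (hH : 0 < H) (h : ℝ) (T : ℝ → ℝ)
    (hT : ContinuousOn T (Set.Icc 0 H))
    (w : ℝ → ℝ)
    (hw : ∀ x, w x = T x - (∫ y in x..H, rker D lam x y * T y) - phiK D lam beta x H * h) :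
    ∀ x ∈ Set.Icc (0 : ℝ) H,
      T x = w x - (∫ y in x..H, qker D lam x y * w y) - psiK D lam beta x H * h := by
  intro x hx
  have hF := bsF_cont
  have hc : 0 < lam / (4 * D) := by positivity
  have hqc : Continuous (Function.uncurry (qker D lam)) := by
    have : Function.uncurry (qker D lam) = fun p : ℝ × ℝ =>
        -2 * (lam / (4 * D)) * p.1 * bsF (lam / (4 * D) * (p.2^2-p.1^2)) := by
      ext ⟨a, b⟩; exact bs_q D lam a b hD
    rw [this]; fun_prop
  have hrc : Continuous (Function.uncurry (rker D lam)) := by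
    have : Function.uncurry (rker D lam) = fun p : ℝ × ℝ =>
        2 * (lam / (4 * D)) * p.1 * bsF (-(lam / (4 * D)) * (p.2^2-p.1^2)) := by
      ext ⟨a, b⟩; exact bs_r D lam a b hD
    rw [this]; fun_prop
  have hker : ∀ z, x ≤ z → ∫ y in x..z, qker D lam x y * rker D lam y z
      = rker D lam x z + qker D lam x z := by
    intro z hz
    have := bs_kernel (lam / (4 * D)) x z hc hx.1 hz
    rw [bs_r D lam x z hD, bs_q D lam x z hD, ← this]
    congr 1; ext y; rw [bs_q D lam x y hD, bs_r D lam y z hD]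
  obtain ⟨S, hS, hST⟩ : ∃ S : ℝ → ℝ, Continuous S ∧ ∀ y ∈ Set.Icc 0 H, T y = S y := by
    refine ⟨Set.IccExtend hH.le ((Set.Icc 0 H).domRestrict T), ?_, ?_⟩
    · exact (continuousOn_iff_continuous_domRestrict.1 hT).Icc_extend'
    · intro y hy
      rw [Set.IccExtend_of_mem _ _ hy]; rfl
  simp only [phiK, psiK] at hw ⊢
  generalize qker D lam = q at *
  generalize hr : rker D lam = r at *
  have hw' : ∀ y ∈ Set.Icc 0 H, w y = S y - (∫ z in y..H, r y z * S z) - D / beta * r y H * h := by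
    intro y hy
    rw [hw, hST y hy]
    congr 2
    apply intervalIntegral.integral_congr
    intro z hz
    rw [Set.uIcc_of_le hy.2] at hz
    simp only
    rw [hST z ⟨hy.1.trans hz.1, hz.2⟩]
  have hRc : Continuous fun y => ∫ z in y..H, r y z * S z := by
    have h1 : Continuous (Function.uncurry fun y z => r y z * S z) :=
      hrc.mul (hS.comp continuous_snd)
    simp only [fun y => intervalIntegral.integral_symm (f := fun z => r y z * S z) (μ := MeasureTheory.volume) H y]
    exact (intervalIntegral.continuous_parametric_intervalIntegral_of_continuous h1 continuous_id).neg
  have hqx : Continuous (q x) := hqc.comp (by fun_prop : Continuous fun y => (x, y))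
  have hrx : Continuous (r x) := hrc.comp (by fun_prop : Continuous fun y => (x, y))
  have hrH : Continuous (fun y => r y H) := hrc.comp (by fun_prop : Continuous fun y => (y, H))
  have e1 : ∫ y in x..H, q x y * w y = (∫ y in x..H, q x y * S y)
      - (∫ y in x..H, ∫ z in y..H, q x y * r y z * S z)
      - D / beta * h * ∫ y in x..H, q x y * r y H := by
    have i1 : IntervalIntegrable (fun y => q x y * S y) MeasureTheory.volume x H :=
      (hqx.mul hS).intervalIntegrable _ _
    have i2 : IntervalIntegrable (fun y => ∫ z in y..H, q x y * r y z * S z)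
        MeasureTheory.volume x H := by
      simp only [mul_assoc, intervalIntegral.integral_const_mul]
      exact (hqx.mul hRc).intervalIntegrable _ _
    have i3 : IntervalIntegrable (fun y => D / beta * h * (q x y * r y H))
        MeasureTheory.volume x H :=
      (continuous_const.mul (hqx.mul hrH)).intervalIntegrable _ _
    rw [← intervalIntegral.integral_const_mul, ← intervalIntegral.integral_sub i1 i2,
      ← intervalIntegral.integral_sub (i1.sub i2) i3]
    apply intervalIntegral.integral_congr
    intro y hy
    rw [Set.uIcc_of_le hx.2] at hy
    simp only
    rw [hw' y ⟨hx.1.trans hy.1, hy.2⟩]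
    simp only [mul_assoc, intervalIntegral.integral_const_mul]
    ring
  have e2 : ∫ y in x..H, ∫ z in y..H, q x y * r y z * S z
      = (∫ z in x..H, r x z * S z) + ∫ z in x..H, q x z * S z := by
    rw [bs_swap (fun y z => q x y * r y z * S z) (((hqx.comp continuous_fst).mul hrc).mul (hS.comp continuous_snd)) x H hx.2,
      ← intervalIntegral.integral_add
        (f := fun z => r x z * S z) (g := fun z => q x z * S z)
        ((hrx.mul hS).intervalIntegrable _ _) ((hqx.mul hS).intervalIntegrable _ _)]
    apply intervalIntegral.integral_congr
    intro z hz
    rw [Set.uIcc_of_le hx.2] at hz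
    simp only
    rw [intervalIntegral.integral_mul_const, hker z hz.1]
    ring
  rw [e1, e2, hker H hx.2, hw' x hx, hST x hx]
  ring
end

section
/- For every H̄ > 0 and every ε > 0 there exist positive constants M̲ > 0 and M̄ > 0 such that for every H ∈ (0, H̄], every h ∈ ℝ, and every continuous function T̃ : [0,H] → ℝ, setting w(x) := T̃(x) − ∫_x^H r(x,y) T̃(y) dy − φ(x,H) h, the norm equivalence M̲ · ( ∫₀^H T̃(x)² dx + h² ) ≤ (1/2) ∫₀^H w(x)² dx + (ε/(2β)) h² ≤ M̄ · ( ∫₀^H T̃(x)² dx + h² ) holds. -/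
lemma aux_cont : Continuous (fun s : ℝ => ∑' m : ℕ, s ^ m / (m.factorial * (m + 1).factorial : ℝ)) := by
  rw [continuous_iff_continuousAt]
  intro s
  have h : ContinuousOn (fun s : ℝ => ∑' m : ℕ, s ^ m / (m.factorial * (m + 1).factorial : ℝ))
      (Metric.ball 0 (|s| + 1)) := by
    refine continuousOn_tsum (u := fun m : ℕ => (|s| + 1) ^ m / m.factorial) ?_ ?_ ?_
    · intro m
      fun_prop
    · exact Real.summable_pow_div_factorial _
    · intro m x hx
      have hx' : |x| ≤ |s| + 1 := by
        have := mem_ball_zero_iff.1 hx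
        rw [Real.norm_eq_abs] at this
        exact this.le
      have h1 : (1 : ℝ) ≤ (m + 1).factorial := by exact_mod_cast (m + 1).factorial_pos
      have h0 : (0 : ℝ) < m.factorial := by exact_mod_cast m.factorial_pos
      rw [Real.norm_eq_abs, abs_div, abs_pow, abs_of_pos (mul_pos h0 (by linarith))]
      gcongr
      nlinarith
  refine h.continuousAt (Metric.isOpen_ball.mem_nhds ?_)
  rw [mem_ball_zero_iff, Real.norm_eq_abs]
  linarith

lemma rker_cont (D lam : ℝ) : Continuous (fun p : ℝ × ℝ => rker D lam p.1 p.2) := by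
  unfold rker Psi
  have h := aux_cont.comp (show Continuous (fun p : ℝ × ℝ =>
    -(lam / (4 * D)) * (p.2 ^ 2 - p.1 ^ 2)) by fun_prop)
  exact (continuous_const.mul continuous_fst).mul (continuous_const.mul h)

lemma cs_int (f : ℝ → ℝ) (hf : Continuous f) (a b : ℝ) (hab : a ≤ b) :
    (∫ x in a..b, f x) ^ 2 ≤ (b - a) * ∫ x in a..b, (f x) ^ 2 := by
  rcases hab.eq_or_lt with rfl | hlt
  · simp
  set I := ∫ x in a..b, f x with hI
  have h0 : 0 ≤ ∫ x in a..b, ((b - a) * f x - I) ^ 2 :=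
    intervalIntegral.integral_nonneg hab (fun x _ => sq_nonneg _)
  have h1 : ∫ x in a..b, ((b - a) * f x - I) ^ 2 =
      (b - a) ^ 2 * (∫ x in a..b, (f x) ^ 2) - 2 * (b - a) * I * I + (b - a) * I ^ 2 := by
    have e : ∀ x, ((b - a) * f x - I) ^ 2 =
        (b - a) ^ 2 * (f x) ^ 2 - 2 * (b - a) * I * f x + I ^ 2 := fun x => by ring
    simp only [e]
    rw [intervalIntegral.integral_add, intervalIntegral.integral_sub,
      intervalIntegral.integral_const_mul, intervalIntegral.integral_const_mul,
      intervalIntegral.integral_const, ← hI, smul_eq_mul]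
    all_goals exact Continuous.intervalIntegrable (by fun_prop) _ _
  rw [h1] at h0
  have hp : 0 < b - a := sub_pos.2 hlt
  by_contra hc
  push Not at hc
  nlinarith [mul_pos hp (sub_pos.2 hc)]

lemma core (k : ℝ → ℝ → ℝ) (hk : Continuous (fun p : ℝ × ℝ => k p.1 p.2)) (p : ℝ → ℝ)
    (hp : Continuous p) (K C Hbar H h : ℝ) (hH : 0 < H) (hHb : H ≤ Hbar)
    (hK : ∀ x ∈ Set.Icc 0 H, ∀ y ∈ Set.Icc 0 H, (k x y) ^ 2 ≤ K)
    (hC : ∀ x ∈ Set.Icc 0 H, (p x) ^ 2 ≤ C) (T w : ℝ → ℝ) (hT : Continuous T)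
    (hw : ∀ x, w x = T x - (∫ y in x..H, k x y * T y) - p x * h) :
    (∫ x in (0:ℝ)..H, (w x) ^ 2) ≤
      3 * (1 + K * Hbar ^ 2) * (∫ x in (0:ℝ)..H, (T x) ^ 2) + 3 * C * Hbar * h ^ 2 ∧
    (∫ x in (0:ℝ)..H, (T x) ^ 2) ≤ 3 * Real.exp (3 * K * Hbar * Hbar) *
      ((∫ x in (0:ℝ)..H, (w x) ^ 2) + C * Hbar * h ^ 2) := by
  have hH0 : (0:ℝ) ∈ Set.Icc 0 H := ⟨le_rfl, hH.le⟩
  have hK0 : 0 ≤ K := (sq_nonneg _).trans (hK 0 hH0 0 hH0)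
  have hC0 : 0 ≤ C := (sq_nonneg _).trans (hC 0 hH0)
  have hB0 : 0 < Hbar := hH.trans_le hHb
  have hwc : Continuous w := by
    have h1 : Continuous (fun x => ∫ y in x..H, k x y * T y) := by
      simp_rw [fun x => intervalIntegral.integral_symm (μ := MeasureTheory.volume)
        (f := fun y => k x y * T y) H x]
      refine Continuous.neg ?_
      refine intervalIntegral.continuous_parametric_intervalIntegral_of_continuous
        (f := fun x y => k x y * T y) ?_ continuous_id
      exact hk.mul (hT.comp continuous_snd)
    rw [funext hw]
    fun_prop
  set u : ℝ → ℝ := fun x => ∫ y in x..H, (T y) ^ 2 with hu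
  have hud : ∀ x, HasDerivAt u (-(T x) ^ 2) x := fun x =>
    intervalIntegral.integral_hasDerivAt_left ((hT.pow 2).intervalIntegrable _ _)
      ((hT.pow 2).stronglyMeasurableAtFilter _ _) (hT.pow 2).continuousAt
  have huc : Continuous u := continuous_iff_continuousAt.2 fun x => (hud x).continuousAt
  have hcs : ∀ x ∈ Set.Icc 0 H, (∫ y in x..H, k x y * T y) ^ 2 ≤ K * Hbar * u x := by
    intro x hx
    have hkx : Continuous (k x) := hk.comp (Continuous.prodMk_right x)
    have h1 := cs_int (fun y => k x y * T y) (hkx.mul hT) x H hx.2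
    have h2 : ∫ y in x..H, (k x y * T y) ^ 2 ≤ ∫ y in x..H, K * (T y) ^ 2 := by
      refine intervalIntegral.integral_mono_on hx.2
        (Continuous.intervalIntegrable (by fun_prop) _ _)
        (Continuous.intervalIntegrable (by fun_prop) _ _) ?_
      intro y hy
      rw [mul_pow]
      exact mul_le_mul_of_nonneg_right (hK x hx y ⟨hx.1.trans hy.1, hy.2⟩) (sq_nonneg _)
    rw [intervalIntegral.integral_const_mul] at h2
    have h3 : 0 ≤ u x := intervalIntegral.integral_nonneg hx.2 (fun y _ => sq_nonneg _)
    calc _ ≤ _ := h1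
      _ ≤ Hbar * (K * u x) := by
        apply mul_le_mul (by linarith [hx.1]) h2 _ hB0.le
        exact intervalIntegral.integral_nonneg hx.2 (fun y _ => sq_nonneg _)
      _ = _ := by ring
  have hum : ∀ x ∈ Set.Icc 0 H, u x ≤ u 0 := by
    intro x hx
    have := intervalIntegral.integral_add_adjacent_intervals
      ((hT.pow 2).intervalIntegrable (μ := MeasureTheory.volume) 0 x)
      ((hT.pow 2).intervalIntegrable x H)
    have h3 : 0 ≤ ∫ y in (0:ℝ)..x, (T y) ^ 2 :=
      intervalIntegral.integral_nonneg hx.1 (fun y _ => sq_nonneg _)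
    simp only [hu]; simp only [Pi.pow_apply] at this
    linarith
  have hu0 : 0 ≤ u 0 := intervalIntegral.integral_nonneg hH.le (fun y _ => sq_nonneg _)
  have hph : ∀ x ∈ Set.Icc 0 H, (p x * h) ^ 2 ≤ C * h ^ 2 := fun x hx => by
    rw [mul_pow]
    exact mul_le_mul_of_nonneg_right (hC x hx) (sq_nonneg _)
  have hCh : 0 ≤ C * h ^ 2 := by positivity
  constructor
  · have h1 : ∫ x in (0:ℝ)..H, (w x) ^ 2 ≤
        ∫ x in (0:ℝ)..H, (3 * (T x) ^ 2 + 3 * (K * Hbar * u 0 + C * h ^ 2)) := by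
      refine intervalIntegral.integral_mono_on hH.le
        (Continuous.intervalIntegrable (by fun_prop) _ _)
        (Continuous.intervalIntegrable (by fun_prop) _ _) ?_
      intro x hx
      have a1 := hcs x hx
      have a2 := hph x hx
      have a3 : K * Hbar * u x ≤ K * Hbar * u 0 :=
        mul_le_mul_of_nonneg_left (hum x hx) (by positivity)
      rw [hw x]
      generalize (∫ y in x..H, k x y * T y) = J at *
      generalize p x * h = q at *
      nlinarith [sq_nonneg (T x + J), sq_nonneg (T x + q), sq_nonneg (J - q)]
    rw [intervalIntegral.integral_add, intervalIntegral.integral_const_mul,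
      intervalIntegral.integral_const, smul_eq_mul, sub_zero] at h1
    · have h2 : H * (3 * (K * Hbar * u 0 + C * h ^ 2)) ≤
          Hbar * (3 * (K * Hbar * u 0 + C * h ^ 2)) :=
        mul_le_mul_of_nonneg_right hHb (by positivity)
      change _ ≤ 3 * (1 + K * Hbar ^ 2) * u 0 + _
      change _ ≤ 3 * u 0 + _ at h1
      linarith
    all_goals exact Continuous.intervalIntegrable (by fun_prop) _ _
  · set c := 3 * K * Hbar with hc
    have hc0 : 0 ≤ c := by positivity
    have hF : ∀ x, HasDerivAt (fun x => Real.exp (c * x) * u x)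
        (Real.exp (c * x) * c * u x + Real.exp (c * x) * (-(T x) ^ 2)) x := by
      intro x
      have h1 : HasDerivAt (fun x => Real.exp (c * x)) (Real.exp (c * x) * c) x := by
        simpa using ((hasDerivAt_id x).const_mul c).exp
      exact h1.mul (hud x)
    have hFI := intervalIntegral.integral_eq_sub_of_hasDerivAt (a := 0) (b := H)
      (fun x _ => hF x) (Continuous.intervalIntegrable (by fun_prop) _ _)
    have huH : u H = 0 := by simp [hu]
    simp only [huH, mul_zero, Real.exp_zero, one_mul, zero_sub] at hFI
    have h1 : ∫ x in (0:ℝ)..H, (-(3 * Real.exp (c * Hbar)) * ((w x) ^ 2 + C * h ^ 2)) ≤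
        ∫ x in (0:ℝ)..H, (Real.exp (c * x) * c * u x + Real.exp (c * x) * (-(T x) ^ 2)) := by
      refine intervalIntegral.integral_mono_on hH.le
        (Continuous.intervalIntegrable (by fun_prop) _ _)
        (Continuous.intervalIntegrable (by fun_prop) _ _) ?_
      intro x hx
      have a1 := hcs x hx
      have a2 := hph x hx
      have a3 : (T x) ^ 2 ≤ 3 * ((w x) ^ 2 + C * h ^ 2) + c * u x := by
        have e : T x = w x + (∫ y in x..H, k x y * T y) + p x * h := by rw [hw x]; ring
        rw [e]
        generalize (∫ y in x..H, k x y * T y) = J at *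
        generalize p x * h = q at *
        rw [hc]
        nlinarith [sq_nonneg (w x - J), sq_nonneg (w x - q), sq_nonneg (J - q)]
      have a4 : Real.exp (c * x) ≤ Real.exp (c * Hbar) :=
        Real.exp_le_exp.2 (mul_le_mul_of_nonneg_left (hx.2.trans hHb) hc0)
      have a5 := mul_le_mul_of_nonneg_left a3 (Real.exp_pos (c * x)).le
      have a6 := mul_le_mul_of_nonneg_right a4
        (show 0 ≤ 3 * ((w x) ^ 2 + C * h ^ 2) by positivity)
      linarith
    rw [hFI, intervalIntegral.integral_const_mul, intervalIntegral.integral_add,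
      intervalIntegral.integral_const, smul_eq_mul, sub_zero] at h1
    · change u 0 ≤ _
      have h2 : H * (C * h ^ 2) ≤ Hbar * (C * h ^ 2) := mul_le_mul_of_nonneg_right hHb hCh
      have h3 := mul_le_mul_of_nonneg_left h2 (show 0 ≤ 3 * Real.exp (c * Hbar) by positivity)
      linarith
    all_goals exact Continuous.intervalIntegrable (by fun_prop) _ _

/-- Norm equivalence between the Lyapunov functional of the target variables
`(w,h)` and the spatial L² norm of the error variables `(T̃,h)`, uniformly over
thickness `H ∈ (0,H̄]`: there exist `M̲, M̄ > 0` with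
`M̲(∫T̃² + h²) ≤ (1/2)∫w² + (ε/(2β))h² ≤ M̄(∫T̃² + h²)`. -/
theorem lyapunov_norm_equivalence
    (D lam beta : ℝ) (hD : 0 < D) (hlam : 0 < lam) (hbeta : 0 < beta) :
    ∀ Hbar > (0 : ℝ), ∀ eps > (0 : ℝ),
      ∃ Ml > (0 : ℝ), ∃ Mu > (0 : ℝ),
        ∀ H ∈ Set.Ioc (0 : ℝ) Hbar, ∀ h : ℝ, ∀ T : ℝ → ℝ,
          ContinuousOn T (Set.Icc 0 H) →
          ∀ w : ℝ → ℝ,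
            (∀ x, w x = T x - (∫ y in x..H, rker D lam x y * T y) - phiK D lam beta x H * h) →
            Ml * ((∫ x in (0 : ℝ)..H, (T x) ^ 2) + h ^ 2) ≤
                (1 / 2 : ℝ) * (∫ x in (0 : ℝ)..H, (w x) ^ 2) + eps / (2 * beta) * h ^ 2 ∧
              (1 / 2 : ℝ) * (∫ x in (0 : ℝ)..H, (w x) ^ 2) + eps / (2 * beta) * h ^ 2 ≤
                Mu * ((∫ x in (0 : ℝ)..H, (T x) ^ 2) + h ^ 2) := by
  intro Hbar hHbar eps heps
  have hr := rker_cont D lam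
  obtain ⟨K, hK⟩ : ∃ K, ∀ q ∈ Set.Icc (0:ℝ) Hbar ×ˢ Set.Icc (0:ℝ) Hbar,
      (rker D lam q.1 q.2) ^ 2 ≤ K := by
    obtain ⟨K, hK⟩ := (isCompact_Icc.prod isCompact_Icc).bddAbove_image
      (K := Set.Icc (0:ℝ) Hbar ×ˢ Set.Icc (0:ℝ) Hbar) (hr.pow 2).continuousOn
    exact ⟨K, fun q hq => hK ⟨q, hq, rfl⟩⟩
  have hK0 : 0 ≤ K := (sq_nonneg _).trans (hK (0, 0) ⟨⟨le_rfl, hHbar.le⟩, ⟨le_rfl, hHbar.le⟩⟩)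
  set C := (D / beta) ^ 2 * K with hCdef
  have hC0 : 0 ≤ C := by positivity
  set A := 3 * Real.exp (3 * K * Hbar * Hbar) with hA
  have hA0 : 0 < A := by positivity
  set B := A * (C * Hbar) + 1 with hB
  have hB0 : 0 < B := by positivity
  set e := eps / (2 * beta) with he
  have he0 : 0 < e := by positivity
  refine ⟨min (1 / (2 * A)) (e / B), by positivity,
    3 * (1 + K * Hbar ^ 2) + 3 * C * Hbar + e, by positivity, ?_⟩
  intro H hH h T hT w hw
  set T' : ℝ → ℝ := Set.IccExtend hH.1.le ((Set.Icc 0 H).restrict T) with hT'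
  have hT'c : Continuous T' := (continuousOn_iff_continuous_restrict.1 hT).Icc_extend'
  have hTT : ∀ x ∈ Set.Icc 0 H, T' x = T x := fun x hx => by
    rw [hT', Set.IccExtend_of_mem _ _ hx]; rfl
  have hcore := core (rker D lam) hr (fun x => phiK D lam beta x H)
    (by
      unfold phiK
      exact continuous_const.mul (hr.comp (Continuous.prodMk_left H)))
    K C Hbar H h hH.1 hH.2
    (fun x hx y hy => hK (x, y) ⟨⟨hx.1, hx.2.trans hH.2⟩, ⟨hy.1, hy.2.trans hH.2⟩⟩)
    (fun x hx => by
      unfold phiK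
      rw [mul_pow]
      exact mul_le_mul_of_nonneg_left
        (hK (x, H) ⟨⟨hx.1, hx.2.trans hH.2⟩, ⟨hH.1.le, hH.2⟩⟩) (sq_nonneg _))
    T' (fun x => T' x - (∫ y in x..H, rker D lam x y * T' y) - phiK D lam beta x H * h) hT'c
    (fun x => rfl)
  have e1 : ∫ x in (0:ℝ)..H, (T' x) ^ 2 = ∫ x in (0:ℝ)..H, (T x) ^ 2 := by
    apply intervalIntegral.integral_congr
    intro x hx
    rw [Set.uIcc_of_le hH.1.le] at hx
    simp only [hTT x hx]
  have e2 : ∫ x in (0:ℝ)..H, (T' x - (∫ y in x..H, rker D lam x y * T' y)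
      - phiK D lam beta x H * h) ^ 2 = ∫ x in (0:ℝ)..H, (w x) ^ 2 := by
    apply intervalIntegral.integral_congr
    intro x hx
    rw [Set.uIcc_of_le hH.1.le] at hx
    have e3 : ∫ y in x..H, rker D lam x y * T' y = ∫ y in x..H, rker D lam x y * T y := by
      apply intervalIntegral.integral_congr
      intro y hy
      rw [Set.uIcc_of_le hx.2] at hy
      simp only [hTT y ⟨hx.1.trans hy.1, hy.2⟩]
    simp only [e3, hTT x hx, hw x]
  rw [e1, e2] at hcore
  obtain ⟨c1, c2⟩ := hcore
  have hT0 : 0 ≤ ∫ x in (0:ℝ)..H, (T x) ^ 2 :=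
    intervalIntegral.integral_nonneg hH.1.le (fun y _ => sq_nonneg _)
  have hw0 : 0 ≤ ∫ x in (0:ℝ)..H, (w x) ^ 2 :=
    intervalIntegral.integral_nonneg hH.1.le (fun y _ => sq_nonneg _)
  generalize (∫ x in (0:ℝ)..H, (T x) ^ 2) = X at *
  generalize (∫ x in (0:ℝ)..H, (w x) ^ 2) = Y at *
  constructor
  · set m := min (1 / (2 * A)) (e / B) with hm
    have hm0 : 0 ≤ m := by positivity
    have m1 : m * A ≤ 1 / 2 := by
      calc m * A ≤ 1 / (2 * A) * A := mul_le_mul_of_nonneg_right (min_le_left _ _) hA0.le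
        _ = 1 / 2 := by field_simp
    have m2 : m * B ≤ e := by
      calc m * B ≤ e / B * B := mul_le_mul_of_nonneg_right (min_le_right _ _) hB0.le
        _ = e := by field_simp
    have s : X + h ^ 2 ≤ A * Y + B * h ^ 2 := by rw [hB]; linarith
    have s1 := mul_le_mul_of_nonneg_left s hm0
    have s2 := mul_le_mul_of_nonneg_right m1 hw0
    have s3 := mul_le_mul_of_nonneg_right m2 (sq_nonneg h)
    linarith
  · have t1 : 0 ≤ 3 * (1 + K * Hbar ^ 2) * X := by positivity
    have t2 : 0 ≤ 3 * C * Hbar * h ^ 2 := by positivity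
    have t3 : 0 ≤ 3 * C * Hbar * X := by positivity
    have t4 : 0 ≤ e * X := by positivity
    have t5 : 0 ≤ 3 * (1 + K * Hbar ^ 2) * h ^ 2 := by positivity
    linarith
end
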